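/- Let f(x) = a·x² + b·x + c with a ≥ 1 and b, c ≥ 0. The in-degrees of the q-Jaco graph are stepwise consecutive: for every k ∈ ℕ, d⁻(v_{k+1}) equals either d⁻(v_k) or d⁻(v_k) + 1. -/

import Mathlib

/-- In-degree of vertex `v_j` in the (root) Jaco graph with incidence function `f`:
`d⁻(v_j) = |{ i : 1 ≤ i < j, i + f i − d⁻(v_i) ≥ j }|`. -/
noncomputable def jacoIn (f : ℕ → ℕ) (j : ℕ) : ℕ :=
  Nat.strongRecOn j (fun j ih =>
    (((Finset.Ico 1 j).attach).filter (fun i : {x // x ∈ Finset.Ico 1 j} =>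
      j ≤ i.1 + f i.1 - ih i.1 (Finset.mem_Ico.mp i.2).2)).card)

/-- The arc `(v_i, v_j)` is present in the Jaco graph iff `1 ≤ i < j` and
`i + f i − d⁻(v_i) ≥ j`. -/
def jacoArc (f : ℕ → ℕ) (i j : ℕ) : Prop :=
  1 ≤ i ∧ i < j ∧ j ≤ i + f i - jacoIn f i

noncomputable instance (f : ℕ → ℕ) (i j : ℕ) : Decidable (jacoArc f i j) := by
  unfold jacoArc; infer_instance

/-- The underlying undirected simple graph `J*_n(f)` of the finite Jaco graph `J_n(f)`,
on vertex set `{v_1, …, v_n}` (vertex `x : Fin n` represents `v_{x+1}`). -/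
def jacoGraph (f : ℕ → ℕ) (n : ℕ) : SimpleGraph (Fin n) :=
  SimpleGraph.fromRel (fun x y => jacoArc f (x.1 + 1) (y.1 + 1))

noncomputable instance (f : ℕ → ℕ) (n : ℕ) : DecidableRel (jacoGraph f n).Adj := fun x y =>
  decidable_of_iff
    (x ≠ y ∧ (jacoArc f (x.1 + 1) (y.1 + 1) ∨ jacoArc f (y.1 + 1) (x.1 + 1)))
    (by unfold jacoGraph; exact (SimpleGraph.fromRel_adj (fun a b : Fin n => jacoArc f (a.1 + 1) (b.1 + 1)) x y).symm)

theorem jacoIn_rec (f : ℕ → ℕ) (j : ℕ) :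
    jacoIn f j = ((Finset.Ico 1 j).filter (fun i => j ≤ i + f i - jacoIn f i)).card := by
  have h : jacoIn f j = (((Finset.Ico 1 j).attach).filter
      (fun i : {x // x ∈ Finset.Ico 1 j} => j ≤ i.1 + f i.1 - jacoIn f i.1)).card := by
    unfold jacoIn
    rw [Nat.strongRecOn_eq]
  rw [h, Finset.filter_attach (fun i => j ≤ i + f i - jacoIn f i)]
  simp

theorem jacoIn_le (f : ℕ → ℕ) (j : ℕ) : jacoIn f j ≤ j := by
  rw [jacoIn_rec]
  refine (Finset.card_filter_le _ _).trans ?_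
  simp

theorem jacoIn_succ_le (f : ℕ → ℕ) (j : ℕ) : jacoIn f (j + 1) ≤ jacoIn f j + 1 := by
  rw [jacoIn_rec f (j + 1), jacoIn_rec f j]
  refine le_trans (Finset.card_le_card ?_) (Finset.card_insert_le j _)
  intro i hi
  simp only [Finset.mem_filter, Finset.mem_Ico, Finset.mem_insert] at hi ⊢
  omega

theorem jacoIn_le_succ (f : ℕ → ℕ) (hf : ∀ i, f i < f (i + 1)) (j : ℕ) :
    jacoIn f j ≤ jacoIn f (j + 1) := by
  rw [jacoIn_rec f (j + 1), jacoIn_rec f j]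
  refine Finset.card_le_card_of_injOn (fun i => i + 1) ?_ (fun x _ y _ h => by simpa using h)
  intro i hi
  simp only [Finset.coe_filter, Finset.mem_Ico, Set.mem_setOf_eq] at hi ⊢
  have h1 := jacoIn_succ_le f i
  have h2 := jacoIn_le f i
  have h3 := hf i
  omega

/-- For `f(x) = a·x² + b·x + c` (`a ≥ 1`, `b, c ≥ 0`), the in-degrees of
the q-Jaco graph are stepwise consecutive: for every `k ∈ ℕ` (`k ≥ 1`), `d⁻(v_{k+1})`
equals `d⁻(v_k)` or `d⁻(v_k) + 1`. -/
theorem qJaco_indegrees_stepwise (a b c : ℕ) (ha : 1 ≤ a) (k : ℕ) (hk : 1 ≤ k) :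
    jacoIn (fun x => a * x ^ 2 + b * x + c) (k + 1) =
      jacoIn (fun x => a * x ^ 2 + b * x + c) k ∨
    jacoIn (fun x => a * x ^ 2 + b * x + c) (k + 1) =
      jacoIn (fun x => a * x ^ 2 + b * x + c) k + 1 := by
  have h1 := jacoIn_succ_le (fun x => a * x ^ 2 + b * x + c) k
  have h2 := jacoIn_le_succ (fun x => a * x ^ 2 + b * x + c) (fun i => by
    show a * i ^ 2 + b * i + c < a * (i + 1) ^ 2 + b * (i + 1) + c
    nlinarith [Nat.zero_le (a * i)]) k
  omega
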